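/- Consider the scalar problem (SP): minimize f(x) subject to g(x) ≦ 0 (componentwise), where X ⊆ ℝ^s is an open convex set and f : X → ℝ, g : X → ℝ^m are Fréchet differentiable. Suppose that f is quasiconvex on X and, for every feasible point x, all components g_i with i in the active index set I(x) := {i | g_i(x) = 0} are strictly quasiconvex. Then the problem (SP) is FJ-pseudoconvex if and only if every Fritz John stationary point x of (SP) is a global solution of (SP). -/

import Mathlib

open Set

/-- If the segments from `x` to points of lower value stay below the level `h x`, then a nonzero
derivative of `h` at `x` is negative in the direction of every point of lower value. -/
theorem HasFDerivAt.apply_sub_neg_of_forall_segment_le {E : Type*} [NormedAddCommGroup E]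
    [NormedSpace ℝ E] {X : Set E} (hX : IsOpen X) {h : E → ℝ} {L : E →L[ℝ] ℝ} {x y : E}
    (hL : HasFDerivAt h L x) (hL0 : L ≠ 0)
    (hseg : ∀ w ∈ X, h w < h x → ∀ z ∈ segment ℝ x w, h z ≤ h x)
    (hyX : y ∈ X) (hy : ContinuousAt h y) (hlt : h y < h x) : L (y - x) < 0 := by
  have nonpos : ∀ w ∈ X, h w < h x → L (w - x) ≤ 0 := fun w hw hlt =>
    IsLocalMaxOn.hasFDerivWithinAt_nonpos
      (IsMaxOn.localize (s := segment ℝ x w) (hseg w hw hlt)) hL.hasFDerivWithinAt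
      (sub_mem_posTangentConeAt_of_segment_subset Subset.rfl)
  obtain ⟨v, hv⟩ : ∃ v, 0 < L v := by
    obtain ⟨v, hv⟩ := DFunLike.ne_iff.mp hL0
    rcases lt_or_gt_of_ne hv with hv | hv
    · exact ⟨-v, by simpa using hv⟩
    · exact ⟨v, by simpa using hv⟩
  have hev : ∀ᶠ w in nhds y, w ∈ X ∧ h w < h x :=
    Filter.Eventually.and (hX.mem_nhds hyX) (hy.eventually_lt_const hlt)
  have hlim : Filter.Tendsto (fun ε : ℝ => y + ε • v) (nhdsWithin 0 (Ioi 0)) (nhds y) := by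
    have hc : Continuous fun ε : ℝ => y + ε • v := by fun_prop
    simpa using (hc.tendsto 0).mono_left nhdsWithin_le_nhds
  obtain ⟨ε, ⟨hmem, hlow⟩, hε⟩ := ((hlim.eventually hev).and self_mem_nhdsWithin).exists
  have hle := nonpos _ hmem hlow
  rw [add_sub_right_comm, map_add, map_smul, smul_eq_mul] at hle
  have := mul_pos (mem_Ioi.mp hε) hv
  linarith

/-- Consider the scalar problem (SP): minimize `f x` subject to `g x ≦ 0`
(componentwise), with `X ⊆ ℝ^s` an open convex set and `f : X → ℝ`, `g : X → ℝ^m`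
Fréchet differentiable (derivatives `Jf`, `Jg`).  Suppose `f` is quasiconvex on `X`
and, for every feasible point `x`, all active components `g_i` (`g_i x = 0`) are
strictly quasiconvex.  Then (SP) is FJ-pseudoconvex iff every Fritz John stationary
point of (SP) is a global solution of (SP). -/
theorem stmt_12 {s m : ℕ} (X : Set (Fin s → ℝ)) (hXopen : IsOpen X)
    (hXconvex : Convex ℝ X)
    (f : (Fin s → ℝ) → ℝ)
    (Jf : (Fin s → ℝ) → ((Fin s → ℝ) →L[ℝ] ℝ))
    (hfdiff : ∀ x ∈ X, HasFDerivAt f (Jf x) x)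
    (g : (Fin s → ℝ) → (Fin m → ℝ))
    (Jg : (Fin s → ℝ) → ((Fin s → ℝ) →L[ℝ] (Fin m → ℝ)))
    (hgdiff : ∀ x ∈ X, HasFDerivAt g (Jg x) x)
    -- `f` is quasiconvex on `X`:
    (hfquasi : ∀ x ∈ X, ∀ y ∈ X, ∀ t ∈ Icc (0 : ℝ) 1,
      f (x + t • (y - x)) ≤ max (f x) (f y))
    -- all components active at some feasible point are strictly quasiconvex:
    (hgssq : ∀ x ∈ X, (∀ i, g x i ≤ 0) → ∀ i, g x i = 0 →
      ∀ a ∈ X, ∀ b ∈ X, b ≠ a → ∀ t ∈ Ioo (0 : ℝ) 1,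
        g (a + t • (b - a)) i < max (g a i) (g b i)) :
    -- (SP) is FJ-pseudoconvex ↔ every Fritz John stationary point is a global solution:
    (∀ x ∈ X, ∀ y ∈ X,
      f y < f x → (∀ i, g x i ≤ 0) → (∀ i, g y i ≤ 0) →
        Jf x (y - x) < 0 ∧ ∀ i, g x i = 0 → Jg x (y - x) i < 0) ↔
    (∀ x ∈ X, (∀ i, g x i ≤ 0) →
      (∃ lam0 : ℝ, ∃ mu : Fin m → ℝ, 0 ≤ lam0 ∧ (∀ i, 0 ≤ mu i) ∧
        ¬(lam0 = 0 ∧ mu = 0) ∧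
        (∀ v : Fin s → ℝ, lam0 * Jf x v + ∑ i, mu i * Jg x v i = 0) ∧
        (∀ i, mu i * g x i = 0)) →
      ∀ y ∈ X, (∀ i, g y i ≤ 0) → f x ≤ f y) := by
  constructor
  · rintro hFJ x hx hgx ⟨lam0, mu, hlam, hmu, hne, hstat, hcomp⟩ y hy hgy
    by_contra! hlt
    obtain ⟨hf, hg⟩ := hFJ x hx y hy hlt hgx hgy
    have hterm : ∀ i, mu i * Jg x (y - x) i ≤ 0 := fun i => by
      rcases mul_eq_zero.mp (hcomp i) with h | h
      · simp [h]
      · exact mul_nonpos_of_nonneg_of_nonpos (hmu i) (hg i h).le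
    have hsum := Finset.sum_nonpos fun i (_ : i ∈ Finset.univ) => hterm i
    have hfst : lam0 * Jf x (y - x) ≤ 0 := mul_nonpos_of_nonneg_of_nonpos hlam hf.le
    have hst := hstat (y - x)
    refine hne ⟨?_, funext fun i => ?_⟩
    · exact (mul_eq_zero.mp (by linarith : lam0 * Jf x (y - x) = 0)).resolve_right hf.ne
    · have hzero := (Finset.sum_eq_zero_iff_of_nonpos fun i _ => hterm i).mp
        (by linarith) i (Finset.mem_univ i)
      rcases mul_eq_zero.mp (hcomp i) with h | h
      · exact h
      · exact (mul_eq_zero.mp hzero).resolve_right (hg i h).ne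
  · intro hstat x hx y hy hlt hgx hgy
    have hnot := fun hFJ => (hstat x hx hgx hFJ y hy hgy).not_gt hlt
    refine ⟨?_, fun i hi => ?_⟩
    · refine (hfdiff x hx).apply_sub_neg_of_forall_segment_le hXopen (fun h0 => ?_) ?_ hy
        (hfdiff y hy).continuousAt hlt
      · exact hnot ⟨1, 0, zero_le_one, fun _ => le_rfl, by simp, by simp [h0], by simp⟩
      · intro w hw hwlt z hz
        rw [segment_eq_image'] at hz
        obtain ⟨t, ht, rfl⟩ := hz
        exact (hfquasi x hx w hw t ht).trans (max_le le_rfl hwlt.le)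
    · have hgi : ∀ a ∈ X, HasFDerivAt (fun a => g a i)
          ((ContinuousLinearMap.proj i).comp (Jg a)) a := fun a ha =>
        hasFDerivAt_pi'.mp (hgdiff a ha) i
      have hyx : y ≠ x := by
        rintro rfl
        exact hlt.false
      have hzX : x + (1 / 2 : ℝ) • (y - x) ∈ X :=
        hXconvex.add_smul_sub_mem hx hy (by norm_num)
      have hz : g (x + (1 / 2 : ℝ) • (y - x)) i < g x i :=
        (hgssq x hx hgx i hi x hx y hy hyx (1 / 2) (by norm_num)).trans_le
          (max_le le_rfl (hi ▸ hgy i))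
      have key := (hgi x hx).apply_sub_neg_of_forall_segment_le hXopen (fun h0 => ?_) ?_ hzX
        (hgi _ hzX).continuousAt hz
      · rw [add_sub_cancel_left, map_smul, smul_eq_mul] at key
        exact (pos_iff_neg_of_mul_neg key).mp (by norm_num)
      · refine hnot ⟨0, Pi.single i 1, le_rfl, fun j => ?_, ?_, fun v => ?_, fun j => ?_⟩
        · rcases eq_or_ne j i with rfl | hj <;> simp [*]
        · simp
        · have := DFunLike.congr_fun h0 v
          simpa [Pi.single_apply] using this
        · rcases eq_or_ne j i with rfl | hj <;> simp [*]
      · intro w hw hwlt z hz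
        rw [segment_eq_image'] at hz
        obtain ⟨t, ht, rfl⟩ := hz
        have hwx : w ≠ x := by
          rintro rfl
          exact hwlt.false
        rcases ht.1.eq_or_lt with rfl | h0
        · simp
        rcases ht.2.eq_or_lt with rfl | h1
        · simpa using hwlt.le
        exact (hgssq x hx hgx i hi x hx w hw hwx t ⟨h0, h1⟩).le.trans (max_le le_rfl hwlt.le)
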